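/- Let d ≥ 3, fix k ∈ {0,…,d−1}, and let w be the middle component of f^k(T_{d−1−k}). If k = d−1, then w = (d−1)F_{d−1}(d−1), w has exactly two left and two right extensions in u_d, B := w·φ^{d−1}(0) is a complete return word to w in u_d, and every complete return word R to w in u_d satisfies R⃗ ≥ B⃗ componentwise. If k < d−1, then w = F_k(d−1), w has exactly two left and two right extensions in u_d, both A := φ^k(d−1)·w and B := w·φ^{d−1}(0) are complete return words to w in u_d, and every complete return word R to w in u_d satisfies R⃗ ≥ A⃗ or R⃗ ≥ B⃗ componentwise. -/

import Mathlib

namespace RichRT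

variable {A : Type*}

/-- The word `w` occurs in the sequence `u` at position `j`. -/
def OccursAt (w : List A) (u : ℕ → A) (j : ℕ) : Prop :=
  w = (List.range w.length).map fun t => u (j + t)

/-- `w` is a factor of the infinite sequence `u`. -/
def IsFactorS (w : List A) (u : ℕ → A) : Prop :=
  ∃ j : ℕ, OccursAt w u j

/-- `u` is recurrent: every factor occurs infinitely often. -/
def Recurrent (u : ℕ → A) : Prop :=
  ∀ w : List A, IsFactorS w u → ∀ N : ℕ, ∃ j, N ≤ j ∧ OccursAt w u j

/-- The number of distinct palindromic factors of a finite word. -/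
noncomputable def palCount (w : List A) : ℕ :=
  Set.ncard {p : List A | p <:+: w ∧ p.reverse = p}

/-- A finite word of length `n` is rich if it has exactly `n+1` palindromic factors. -/
def RichWord (w : List A) : Prop := palCount w = w.length + 1

/-- A sequence is rich if all its factors are rich. -/
def RichSeq (u : ℕ → A) : Prop := ∀ w : List A, IsFactorS w u → RichWord w

/-- The prefix of length `k` of the periodic sequence `vvv⋯`. -/
def powPref (v : List A) (k : ℕ) : List A := ((List.replicate k v).flatten).take k

/-- The set of exponents `k/|v|` of fractional powers `v^(k/|v|)` occurring in `u`,
with `|v| ≥ n`. -/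
def expSet (u : ℕ → A) (n : ℕ) : Set ℝ :=
  {x | ∃ (v : List A) (k : ℕ), v ≠ [] ∧ n ≤ v.length ∧
    IsFactorS (powPref v k) u ∧ x = (k : ℝ) / (v.length : ℝ)}

/-- The critical exponent of a sequence, with values in `EReal`. -/
noncomputable def critExp (u : ℕ → A) : EReal :=
  sSup ((fun x : ℝ => (x : EReal)) '' expSet u 0)

/-- The asymptotic critical exponent of a sequence: `⊤` if the critical exponent is `⊤`,
otherwise the limit (= infimum, by monotonicity) over `n` of the suprema of exponents of
powers `v^e` with `|v| ≥ n`. -/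
noncomputable def acritExp (u : ℕ → A) : EReal :=
  if critExp u = ⊤ then ⊤
  else ⨅ n : ℕ, sSup ((fun x : ℝ => (x : EReal)) '' expSet u n)

/-- The morphism `φ_d` on letters: `i ↦ 0(i+1)` for `i < d-1`, `d-1 ↦ 0(d-1)(d-1)`. -/
def phiL (d : ℕ) (i : ℕ) : List ℕ :=
  if i < d - 1 then [0, i + 1] else [0, d - 1, d - 1]

/-- The morphism `φ_d` on words. -/
def phiW (d : ℕ) (w : List ℕ) : List ℕ := w.flatMap (phiL d)

/-- `u` is the fixed point of `φ_d`: it begins with `0` and `φ_d(u) = u`, i.e. the image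
of every prefix of `u` is again a prefix of `u`. -/
def IsPhiFixed (d : ℕ) (u : ℕ → ℕ) : Prop :=
  u 0 = 0 ∧ ∀ m : ℕ, OccursAt (phiW d ((List.range m).map u)) u 0

/-- Left extensions of `w` in `u`. -/
def Lext (u : ℕ → ℕ) (w : List ℕ) : Set (List ℕ) :=
  {x | ∃ i : ℕ, x = i :: w ∧ IsFactorS x u}

/-- Right extensions of `w` in `u`. -/
def Rext (u : ℕ → ℕ) (w : List ℕ) : Set (List ℕ) :=
  {x | ∃ i : ℕ, x = w ++ [i] ∧ IsFactorS x u}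

/-- Both-sided extensions of `w` in `u`. -/
def Bext (u : ℕ → ℕ) (w : List ℕ) : Set (List ℕ) :=
  {x | ∃ i j : ℕ, x = i :: (w ++ [j]) ∧ IsFactorS x u}

/-- `w` is a bispecial factor of `u`. -/
def Bispecial (u : ℕ → ℕ) (w : List ℕ) : Prop :=
  IsFactorS w u ∧ 2 ≤ (Lext u w).ncard ∧ 2 ≤ (Rext u w).ncard

/-- The bilateral order `b(w) = #Bext(w) − #Lext(w) − #Rext(w) + 1`. -/
noncomputable def bord (u : ℕ → ℕ) (w : List ℕ) : ℤ :=
  ((Bext u w).ncard : ℤ) - ((Lext u w).ncard : ℤ) - ((Rext u w).ncard : ℤ) + 1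

/-- The palindromes `F_0 = ε`, `F_i = φ(F_{i-1})0`. -/
def Fword (d : ℕ) : ℕ → List ℕ
  | 0 => []
  | i + 1 => phiW d (Fword d i) ++ [0]

/-- Membership in the set `𝒯` of bispecial triplets. -/
def TripleMem (d : ℕ) (u : ℕ → ℕ) (t : ℕ × List ℕ × ℕ) : Prop :=
  Bispecial u t.2.1 ∧ t.1 < d - 1 ∧ t.2.2 < d - 1 ∧
    IsFactorS (t.1 :: t.2.1) u ∧ IsFactorS (t.2.1 ++ [t.2.2]) u

/-- The map `f` on triplets. -/
def fmap (d : ℕ) (t : ℕ × List ℕ × ℕ) : ℕ × List ℕ × ℕ :=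
  ((t.1 + 1) % (d - 1),
   (if t.1 = d - 2 then [d - 1] else []) ++ phiW d t.2.1 ++ [0] ++
     (if t.2.2 = d - 2 then [d - 1] else []),
   (t.2.2 + 1) % (d - 1))

/-- The initial triplets `T_k = (0, ε, k)` for `k ≤ d-2` and `T_{d-1} = (0, d-1, 0)`. -/
def Tinit (d k : ℕ) : ℕ × List ℕ × ℕ :=
  if k = d - 1 then (0, [d - 1], 0) else (0, ([] : List ℕ), k)

/-- The Parikh vector of a word. -/
def parikh (d : ℕ) (w : List ℕ) : Fin d → ℕ := fun i => w.count (i : ℕ)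

/-- The incidence matrix of `φ_d`. -/
def Mmat (d : ℕ) : Matrix (Fin d) (Fin d) ℕ := fun i j => (phiL d (j : ℕ)).count (i : ℕ)

/-- `r` is a return word to `w` in `u`. -/
def ReturnWord (u : ℕ → ℕ) (w r : List ℕ) : Prop :=
  ∃ j ℓ : ℕ, j < ℓ ∧ OccursAt w u j ∧ OccursAt w u ℓ ∧
    (∀ m, j < m → m < ℓ → ¬ OccursAt w u m) ∧
    r = (List.range (ℓ - j)).map fun t => u (j + t)

/-- `R` is a complete return word to `w` in `u`. -/
def CompleteReturn (u : ℕ → ℕ) (w R : List ℕ) : Prop :=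
  ∃ r : List ℕ, ReturnWord u w r ∧ R = r ++ w

/-!
Every occurrence of `F_k (d-1)` in `u` is the beginning of a block `φ^k(u_n)` with
`u_n ≥ d-1-k`, because `0` starts every image of a letter and so `F_k` desubstitutes step by step.
Complete returns to `F_k (d-1)` therefore come from the first returns of `u` to the letters
`≥ d-1-k`. If such a return starts with `d-1`, its image contains `φ^k(d-1)`. Otherwise it starts
with some `c < d-1`; then `c` ends a block `φ^j` with `j = d-1-k`, the next block begins with `F_j`,
and all letters of `F_j` are below `j`, so the return contains `F_j` and its image contains
`F_k (d-1) φ^k(F_j)`. For `k = d-1` every letter qualifies, and the complete returns are determined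
by single letters.
-/

/-! ### Words read off a sequence -/

/-- The word `u_a ⋯ u_{b-1}`, empty when `b ≤ a`. -/
def slice (u : ℕ → A) (a b : ℕ) : List A := (List.Ico a b).map u

section Slice

variable {u : ℕ → A} {a b c : ℕ}

@[simp]
lemma length_slice : (slice u a b).length = b - a := by simp [slice]

lemma slice_singleton : slice u a (a + 1) = [u a] := by simp [slice]

lemma slice_append_slice (hab : a ≤ b) (hbc : b ≤ c) :
    slice u a b ++ slice u b c = slice u a c := by
  rw [slice, slice, slice, ← List.map_append, List.Ico.append_consecutive hab hbc]

lemma slice_succ (hab : a ≤ b) : slice u a (b + 1) = slice u a b ++ [u b] := by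
  rw [slice, List.Ico.succ_top hab, List.map_append, slice, List.map_singleton]

lemma slice_eq_cons (hab : a < b) : slice u a b = u a :: slice u (a + 1) b := by
  rw [slice, List.Ico.eq_cons hab, List.map_cons, slice]

lemma mem_slice {x : A} : x ∈ slice u a b ↔ ∃ t, (a ≤ t ∧ t < b) ∧ u t = x := by
  simp [slice]

lemma map_range_eq_slice (n : ℕ) : ((List.range n).map fun t => u (a + t)) = slice u a (a + n) := by
  rw [slice, List.Ico, Nat.add_sub_cancel_left, List.range'_eq_map_range, List.map_map]
  rfl

end Slice

section Occurrence

variable {u : ℕ → A} {v w : List A} {p : ℕ}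

lemma occursAt_iff_slice : OccursAt w u p ↔ w = slice u p (p + w.length) := by
  rw [OccursAt, map_range_eq_slice]

lemma occursAt_slice {a b : ℕ} (hab : a ≤ b) : OccursAt (slice u a b) u a := by
  rw [occursAt_iff_slice, length_slice, Nat.add_sub_cancel' hab]

lemma isFactorS_slice {a b : ℕ} (hab : a ≤ b) : IsFactorS (slice u a b) u :=
  ⟨a, occursAt_slice hab⟩

@[simp]
lemma occursAt_nil : OccursAt [] u p := rfl

lemma occursAt_append : OccursAt (v ++ w) u p ↔ OccursAt v u p ∧ OccursAt w u (p + v.length) := by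
  simp only [occursAt_iff_slice, List.length_append]
  rw [← slice_append_slice (Nat.le_add_right p v.length) (by lia), add_assoc]
  constructor
  · intro h
    exact List.append_inj h (by simp)
  · rintro ⟨hv, hw⟩
    rw [← hv, ← hw]

@[simp]
lemma occursAt_singleton {x : A} : OccursAt [x] u p ↔ u p = x := by
  simp [OccursAt, eq_comm]

lemma occursAt_cons {x : A} : OccursAt (x :: w) u p ↔ u p = x ∧ OccursAt w u (p + 1) := by
  rw [← List.singleton_append, occursAt_append, occursAt_singleton, List.length_singleton]

lemma OccursAt.of_prefix (hvw : v <+: w) (hw : OccursAt w u p) : OccursAt v u p := by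
  obtain ⟨t, rfl⟩ := hvw
  exact (occursAt_append.1 hw).1

lemma OccursAt.prefix_of_length_le (hv : OccursAt v u p) (hw : OccursAt w u p)
    (hlen : v.length ≤ w.length) : v <+: w := by
  rw [occursAt_iff_slice.1 hv, occursAt_iff_slice.1 hw]
  exact ⟨_, slice_append_slice (by lia) (by lia)⟩

lemma IsFactorS.of_infix (hvw : v <:+: w) (hw : IsFactorS w u) : IsFactorS v u := by
  obtain ⟨s, t, rfl⟩ := hvw
  obtain ⟨p, hp⟩ := hw
  exact ⟨_, (occursAt_append.1 (occursAt_append.1 hp).1).2⟩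

lemma IsFactorS.exists_concat (hw : IsFactorS w u) : ∃ x, IsFactorS (w ++ [x]) u := by
  obtain ⟨p, hp⟩ := hw
  exact ⟨_, p, occursAt_append.2 ⟨hp, occursAt_singleton.2 rfl⟩⟩

end Occurrence

section Extension

variable {u : ℕ → ℕ} {w : List ℕ} {a b : ℕ}

lemma ncard_lext_eq_two (hab : a ≠ b) (ha : IsFactorS (a :: w) u) (hb : IsFactorS (b :: w) u)
    (h : ∀ c, IsFactorS (c :: w) u → c = a ∨ c = b) : (Lext u w).ncard = 2 := by
  have hext : Lext u w = {a :: w, b :: w} := by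
    ext x
    constructor
    · rintro ⟨c, rfl, hc⟩
      rcases h c hc with rfl | rfl <;> simp
    · rintro (rfl | rfl)
      exacts [⟨a, rfl, ha⟩, ⟨b, rfl, hb⟩]
  rw [hext, Set.ncard_pair (by simpa using hab)]

lemma ncard_rext_eq_two (hab : a ≠ b) (ha : IsFactorS (w ++ [a]) u) (hb : IsFactorS (w ++ [b]) u)
    (h : ∀ c, IsFactorS (w ++ [c]) u → c = a ∨ c = b) : (Rext u w).ncard = 2 := by
  have hext : Rext u w = {w ++ [a], w ++ [b]} := by
    ext x
    constructor
    · rintro ⟨c, rfl, hc⟩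
      rcases h c hc with rfl | rfl <;> simp
    · rintro (rfl | rfl)
      exacts [⟨a, rfl, ha⟩, ⟨b, rfl, hb⟩]
  rw [hext, Set.ncard_pair (by simpa using hab)]

end Extension

lemma completeReturn_iff_of_strictMono {u : ℕ → ℕ} {w R : List ℕ} {g : ℕ → ℕ} {S : ℕ → Prop}
    (hg : StrictMono g) (hocc : ∀ p, OccursAt w u p ↔ ∃ n, S n ∧ g n = p) :
    CompleteReturn u w R ↔ ∃ n m, n < m ∧ S n ∧ S m ∧ (∀ t, n < t → t < m → ¬ S t) ∧
      R = slice u (g n) (g m) ++ w := by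
  have hslice {j l : ℕ} (hjl : j < l) :
      ((List.range (l - j)).map fun t => u (j + t)) = slice u j l := by
    rw [map_range_eq_slice, Nat.add_sub_cancel' hjl.le]
  constructor
  · rintro ⟨_, ⟨j, l, hjl, hj, hl, hbetween, rfl⟩, rfl⟩
    obtain ⟨n, hn, rfl⟩ := (hocc j).1 hj
    obtain ⟨m, hm, rfl⟩ := (hocc l).1 hl
    refine ⟨n, m, hg.lt_iff_lt.1 hjl, hn, hm, fun t hnt htm ht => ?_, by rw [hslice hjl]⟩
    exact hbetween (g t) (hg hnt) (hg htm) ((hocc _).2 ⟨t, ht, rfl⟩)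
  · rintro ⟨n, m, hnm, hn, hm, hbetween, rfl⟩
    refine ⟨_, ⟨g n, g m, hg hnm, (hocc _).2 ⟨n, hn, rfl⟩, (hocc _).2 ⟨m, hm, rfl⟩, ?_,
      (hslice (hg hnm)).symm⟩, rfl⟩
    intro q hnq hqm hq
    obtain ⟨t, ht, rfl⟩ := (hocc q).1 hq
    exact hbetween t (hg.lt_iff_lt.1 hnq) (hg.lt_iff_lt.1 hqm) ht

lemma parikh_le_of_sublist (d : ℕ) {v w : List ℕ} (h : v.Sublist w) : parikh d v ≤ parikh d w :=
  fun _ => h.count_le _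

/-! ### The morphism on words -/

section Morphism

variable {d : ℕ}

@[simp]
lemma phiW_append (v w : List ℕ) : phiW d (v ++ w) = phiW d v ++ phiW d w :=
  List.flatMap_append

@[simp]
lemma phiW_singleton (c : ℕ) : phiW d [c] = phiL d c := List.flatMap_singleton ..

lemma iterate_phiW_append (k : ℕ) (v w : List ℕ) :
    (phiW d)^[k] (v ++ w) = (phiW d)^[k] v ++ (phiW d)^[k] w := by
  induction k generalizing v w with
  | zero => rfl
  | succ k ih => simp only [Function.iterate_succ_apply, phiW_append, ih]

lemma iterate_phiW_cons (k c : ℕ) (w : List ℕ) :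
    (phiW d)^[k] (c :: w) = (phiW d)^[k] [c] ++ (phiW d)^[k] w :=
  iterate_phiW_append k [c] w

lemma iterate_phiW_prefix (k : ℕ) {v w : List ℕ} (h : v <+: w) :
    (phiW d)^[k] v <+: (phiW d)^[k] w := by
  obtain ⟨t, rfl⟩ := h
  exact ⟨_, (iterate_phiW_append k v t).symm⟩

lemma pair_prefix_phiL (c : ℕ) : [0, min (c + 1) (d - 1)] <+: phiL d c := by
  unfold phiL
  split_ifs with hc
  · rw [min_eq_left hc]
  · rw [min_eq_right (by lia)]
    exact ⟨[d - 1], rfl⟩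

lemma zero_prefix_phiL (c : ℕ) : [0] <+: phiL d c :=
  (List.prefix_append [0] _).trans (pair_prefix_phiL c)

lemma singleton_suffix_phiL (c : ℕ) : [min (c + 1) (d - 1)] <:+ phiL d c := by
  unfold phiL
  split_ifs with hc
  · exact ⟨[0], by rw [min_eq_left hc]; rfl⟩
  · exact ⟨[0, d - 1], by rw [min_eq_right (by lia)]; rfl⟩

lemma zero_prefix_phiW_concat_zero (v : List ℕ) : [0] <+: phiW d v ++ [0] := by
  cases v with
  | nil => rfl
  | cons c v =>
    refine (zero_prefix_phiL (d := d) c).trans ?_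
    simp [phiW]

lemma lt_of_mem_fword {k a : ℕ} (hk : k ≤ d - 1) (ha : a ∈ Fword d k) : a < k := by
  induction k generalizing a with
  | zero => simp [Fword] at ha
  | succ k ih =>
    simp only [Fword, phiW, List.mem_append, List.mem_flatMap, List.mem_singleton] at ha
    rcases ha with ⟨b, hb, hab⟩ | rfl
    · have hbk := ih (by lia) hb
      rw [phiL, if_pos (by lia)] at hab
      simp only [List.mem_cons, List.not_mem_nil, or_false] at hab
      lia
    · exact k.succ_pos

lemma iterate_phiW_singleton {c k : ℕ} (h : c + k ≤ d - 1) :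
    (phiW d)^[k] [c] = Fword d k ++ [c + k] := by
  induction k with
  | zero => rfl
  | succ k ih =>
    rw [Function.iterate_succ_apply', ih (by lia), phiW_append, phiW_singleton, phiL,
      if_pos (by lia), Fword]
    simp [add_assoc]

lemma fword_concat_prefix_iterate_phiW {c : ℕ} (hc : c ≤ d - 1) (k : ℕ) :
    Fword d k ++ [min (c + k) (d - 1)] <+: (phiW d)^[k] [c] := by
  induction k with
  | zero => simp [Fword, hc]
  | succ k ih =>
    obtain ⟨t, ht⟩ := pair_prefix_phiL (d := d) (min (c + k) (d - 1))
    have hmin : min (min (c + k) (d - 1) + 1) (d - 1) = min (c + (k + 1)) (d - 1) := by lia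
    rw [Function.iterate_succ_apply']
    refine List.IsPrefix.trans ⟨t, ?_⟩ (iterate_phiW_prefix 1 ih)
    simp [Fword, ← ht, hmin]

lemma fword_append_pair_prefix_iterate_phiW {c k : ℕ} (hc : c ≤ d - 1) (hck : d - 1 < c + k) :
    Fword d k ++ [d - 1, d - 1] <+: (phiW d)^[k] [c] := by
  cases k with
  | zero => lia
  | succ k =>
    have h := iterate_phiW_prefix (d := d) 1 (fword_concat_prefix_iterate_phiW hc k)
    rw [min_eq_right (by lia)] at h
    simpa [Function.iterate_succ_apply', Fword, phiL] using h

lemma singleton_suffix_iterate_phiW {c : ℕ} (hc : c ≤ d - 1) (k : ℕ) :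
    [min (c + k) (d - 1)] <:+ (phiW d)^[k] [c] := by
  induction k with
  | zero => simp [hc]
  | succ k ih =>
    obtain ⟨t, ht⟩ := ih
    have hmin : min (min (c + k) (d - 1) + 1) (d - 1) = min (c + (k + 1)) (d - 1) := by lia
    rw [Function.iterate_succ_apply', ← ht, phiW_append, phiW_singleton, ← hmin]
    exact List.suffix_append_of_suffix (singleton_suffix_phiL _)

lemma phiL_suffix_iterate_phiW {c : ℕ} (hc : c ≤ d - 1) (k : ℕ) :
    phiL d (min (c + k) (d - 1)) <:+ (phiW d)^[k + 1] [c] := by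
  obtain ⟨t, ht⟩ := singleton_suffix_iterate_phiW hc k
  rw [Function.iterate_succ_apply', ← ht, phiW_append, phiW_singleton]
  exact List.suffix_append _ _

lemma zero_prefix_iterate_phiW (k : ℕ) : [0] <+: (phiW d)^[k] [0] := by
  induction k with
  | zero => exact List.prefix_rfl
  | succ k ih =>
    rw [Function.iterate_succ_apply']
    refine List.IsPrefix.trans ?_ (iterate_phiW_prefix 1 ih)
    simpa using zero_prefix_phiL 0

lemma iterate_phiW_zero {j k : ℕ} (h : j + k = d - 1) :
    (phiW d)^[d - 1] [0] = (phiW d)^[k] (Fword d j) ++ (Fword d k ++ [d - 1]) := by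
  rw [← h, add_comm j k, Function.iterate_add_apply, iterate_phiW_singleton (by lia),
    iterate_phiW_append, iterate_phiW_singleton (by lia), zero_add, add_comm j k]

end Morphism

/-! ### Desubstitution -/

/-- The position in `u = φ(u)` at which the image `φ(u_n)` of the letter `u_n` begins, that is,
`|φ(u_0 ⋯ u_{n-1})|`. Its iterates locate the images under the powers of `φ`. -/
def phiPos (d : ℕ) (u : ℕ → ℕ) (n : ℕ) : ℕ := (phiW d (slice u 0 n)).length

section PhiPos

variable {d : ℕ} {u : ℕ → ℕ}

@[simp]
lemma phiPos_zero : phiPos d u 0 = 0 := by simp [phiPos, phiW, slice]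

lemma phiPos_succ (n : ℕ) : phiPos d u (n + 1) = phiPos d u n + (phiL d (u n)).length := by
  simp [phiPos, slice_succ]

lemma phiPos_succ_of_lt {n : ℕ} (h : u n < d - 1) : phiPos d u (n + 1) = phiPos d u n + 2 := by
  simp [phiPos_succ, phiL, h]

lemma phiPos_succ_of_le {n : ℕ} (h : d - 1 ≤ u n) :
    phiPos d u (n + 1) = phiPos d u n + 3 := by
  simp [phiPos_succ, phiL, h.not_gt]

lemma strictMono_phiPos : StrictMono (phiPos d u) := by
  refine strictMono_nat_of_lt_succ fun n => ?_
  rw [phiPos_succ, phiL]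
  split_ifs <;> simp

lemma strictMono_iterate_phiPos (k : ℕ) : StrictMono (phiPos d u)^[k] := strictMono_phiPos.iterate k

lemma iterate_phiPos_zero (k : ℕ) : (phiPos d u)^[k] 0 = 0 := Function.iterate_fixed phiPos_zero k

lemma iterate_phiPos_succ_pos (k n : ℕ) : 0 < (phiPos d u)^[k] (n + 1) :=
  (Nat.zero_le _).trans_lt (strictMono_iterate_phiPos k n.lt_succ_self)

lemma exists_phiPos_add (d : ℕ) (u : ℕ → ℕ) (p : ℕ) :
    ∃ n, p = phiPos d u n ∨ p = phiPos d u n + 1 ∨ p = phiPos d u n + 2 ∧ d - 1 ≤ u n := by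
  induction p with
  | zero => exact ⟨0, Or.inl phiPos_zero.symm⟩
  | succ p ih =>
    obtain ⟨n, rfl | rfl | ⟨rfl, hn⟩⟩ := ih
    · exact ⟨n, Or.inr (Or.inl rfl)⟩
    · rcases lt_or_ge (u n) (d - 1) with hn | hn
      · exact ⟨n + 1, Or.inl (phiPos_succ_of_lt hn).symm⟩
      · exact ⟨n, Or.inr (Or.inr ⟨rfl, hn⟩)⟩
    · exact ⟨n + 1, Or.inl (phiPos_succ_of_le hn).symm⟩

end PhiPos

namespace IsPhiFixed

variable {d : ℕ} {u : ℕ → ℕ}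

lemma phiW_slice (hu : IsPhiFixed d u) {a b : ℕ} (hab : a ≤ b) :
    phiW d (slice u a b) = slice u (phiPos d u a) (phiPos d u b) := by
  have hprefix (n : ℕ) : phiW d (slice u 0 n) = slice u 0 (phiPos d u n) := by
    have hn := hu.2 n
    rwa [← List.Ico.zero_bot, occursAt_iff_slice, zero_add] at hn
  have h := hprefix b
  rw [← slice_append_slice a.zero_le hab, phiW_append, hprefix a,
    ← slice_append_slice (Nat.zero_le _) (strictMono_phiPos.monotone hab)] at h
  exact List.append_cancel_left h

lemma iterate_phiW_slice (hu : IsPhiFixed d u) (k : ℕ) {a b : ℕ} (hab : a ≤ b) :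
    (phiW d)^[k] (slice u a b) = slice u ((phiPos d u)^[k] a) ((phiPos d u)^[k] b) := by
  induction k with
  | zero => rfl
  | succ k ih =>
    simp only [Function.iterate_succ_apply', ih,
      hu.phiW_slice ((strictMono_iterate_phiPos k).monotone hab)]

lemma iterate_phiW_singleton_apply (hu : IsPhiFixed d u) (k n : ℕ) :
    (phiW d)^[k] [u n] = slice u ((phiPos d u)^[k] n) ((phiPos d u)^[k] (n + 1)) := by
  rw [← slice_singleton, hu.iterate_phiW_slice k n.le_succ]

lemma occursAt_iterate_phiW (hu : IsPhiFixed d u) (k : ℕ) {v : List ℕ} {n : ℕ}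
    (hv : OccursAt v u n) : OccursAt ((phiW d)^[k] v) u ((phiPos d u)^[k] n) := by
  have hle : n ≤ n + v.length := Nat.le_add_right _ _
  rw [occursAt_iff_slice.1 hv, hu.iterate_phiW_slice k hle]
  exact occursAt_slice ((strictMono_iterate_phiPos k).monotone hle)

lemma isFactorS_iterate_phiW (hu : IsPhiFixed d u) (k : ℕ) {v : List ℕ} (hv : IsFactorS v u) :
    IsFactorS ((phiW d)^[k] v) u := by
  obtain ⟨n, hn⟩ := hv
  exact ⟨_, hu.occursAt_iterate_phiW k hn⟩

lemma occursAt_phiL (hu : IsPhiFixed d u) (n : ℕ) : OccursAt (phiL d (u n)) u (phiPos d u n) := by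
  simpa using hu.occursAt_iterate_phiW 1 (occursAt_singleton.2 rfl : OccursAt [u n] u n)

lemma occursAt_pair (hu : IsPhiFixed d u) (n : ℕ) :
    OccursAt [0, min (u n + 1) (d - 1)] u (phiPos d u n) :=
  (hu.occursAt_phiL n).of_prefix (pair_prefix_phiL _)

lemma apply_phiPos (hu : IsPhiFixed d u) (n : ℕ) : u (phiPos d u n) = 0 :=
  (occursAt_cons.1 (hu.occursAt_pair n)).1

lemma apply_phiPos_add_one (hu : IsPhiFixed d u) (n : ℕ) :
    u (phiPos d u n + 1) = min (u n + 1) (d - 1) :=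
  occursAt_singleton.1 (occursAt_cons.1 (hu.occursAt_pair n)).2

lemma apply_phiPos_add_two_of_le (hu : IsPhiFixed d u) {n : ℕ} (hn : d - 1 ≤ u n) :
    u (phiPos d u n + 2) = d - 1 := by
  have h := hu.occursAt_phiL n
  simp only [phiL, if_neg hn.not_gt, occursAt_cons] at h
  exact h.2.2.1

lemma apply_phiPos_add_two_of_lt (hu : IsPhiFixed d u) {n : ℕ} (hn : u n < d - 1) :
    u (phiPos d u n + 2) = 0 := by
  rw [← phiPos_succ_of_lt hn, hu.apply_phiPos]

lemma apply_phiPos_add_three_of_le (hu : IsPhiFixed d u) {n : ℕ} (hn : d - 1 ≤ u n) :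
    u (phiPos d u n + 3) = 0 := by
  rw [← phiPos_succ_of_le hn, hu.apply_phiPos]

lemma apply_le (hu : IsPhiFixed d u) (p : ℕ) : u p ≤ d - 1 := by
  obtain ⟨n, rfl | rfl | ⟨rfl, hn⟩⟩ := exists_phiPos_add d u p
  · simp [hu.apply_phiPos]
  · simp [hu.apply_phiPos_add_one]
  · rw [hu.apply_phiPos_add_two_of_le hn]

lemma exists_phiPos_eq_of_apply_eq_zero (hu : IsPhiFixed d u) (hd : 2 ≤ d) {p : ℕ}
    (hp : u p = 0) : ∃ n, phiPos d u n = p := by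
  obtain ⟨n, rfl | rfl | ⟨rfl, hn⟩⟩ := exists_phiPos_add d u p
  · exact ⟨n, rfl⟩
  · rw [hu.apply_phiPos_add_one] at hp
    lia
  · rw [hu.apply_phiPos_add_two_of_le hn] at hp
    lia

lemma phiPos_add_length (hu : IsPhiFixed d u) {v : List ℕ} {n : ℕ} (hv : OccursAt v u n) :
    phiPos d u n + (phiW d v).length = phiPos d u (n + v.length) := by
  have hle : n ≤ n + v.length := Nat.le_add_right _ _
  have hlen := congrArg (fun x => (phiW d x).length) (occursAt_iff_slice.1 hv)
  simp only [hu.phiW_slice hle, length_slice] at hlen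
  rw [hlen, Nat.add_sub_cancel' (strictMono_phiPos.monotone hle)]

lemma apply_eq_of_occursAt_phiL (hu : IsPhiFixed d u) {c n : ℕ} (hc : c ≤ d - 1)
    (h : OccursAt (phiL d c ++ [0]) u (phiPos d u n)) : u n = c := by
  have hone := hu.apply_phiPos_add_one n
  have hn := hu.apply_le n
  unfold phiL at h
  split_ifs at h with hcd
  · simp only [List.cons_append, List.nil_append, occursAt_cons, add_assoc] at h
    have hlt : u n < d - 1 := by
      by_contra! hle
      have htwo := hu.apply_phiPos_add_two_of_le hle
      lia
    lia
  · simp only [List.cons_append, List.nil_append, occursAt_cons, add_assoc] at h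
    have hle : ¬u n < d - 1 := fun hlt => by
      have htwo := hu.apply_phiPos_add_two_of_lt hlt
      lia
    lia

lemma occursAt_of_occursAt_phiW (hu : IsPhiFixed d u) {v : List ℕ} {n : ℕ}
    (hv : ∀ c ∈ v, c ≤ d - 1) (h : OccursAt (phiW d v ++ [0]) u (phiPos d u n)) :
    OccursAt v u n := by
  induction v generalizing n with
  | nil => exact occursAt_nil
  | cons c v ih =>
    have hcons : phiW d (c :: v) ++ [0] = phiL d c ++ (phiW d v ++ [0]) := by simp [phiW]
    rw [hcons, occursAt_append] at h
    obtain ⟨hc, hrest⟩ := h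
    have hn : u n = c := hu.apply_eq_of_occursAt_phiL (hv c List.mem_cons_self) <|
      occursAt_append.2 ⟨hc, hrest.of_prefix (zero_prefix_phiW_concat_zero v)⟩
    rw [← hn, ← phiPos_succ] at hrest
    exact occursAt_cons.2 ⟨hn, ih (fun b hb => hv b (List.mem_cons_of_mem _ hb)) hrest⟩

lemma occursAt_fword (hu : IsPhiFixed d u) (k n : ℕ) :
    OccursAt (Fword d k ++ [min (u n + k) (d - 1)]) u ((phiPos d u)^[k] n) :=
  (hu.occursAt_iterate_phiW k (occursAt_singleton.2 rfl)).of_prefix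
    (fword_concat_prefix_iterate_phiW (hu.apply_le n) k)

lemma exists_iterate_phiPos_of_occursAt_fword (hu : IsPhiFixed d u) (hd : 2 ≤ d) {k p : ℕ}
    (hk : k ≤ d - 1) (h : OccursAt (Fword d k) u p) (hnext : k ≤ u (p + (Fword d k).length)) :
    ∃ n, (phiPos d u)^[k] n = p := by
  induction k generalizing p with
  | zero => exact ⟨p, rfl⟩
  | succ k ih =>
    rw [Fword] at h
    have hzero : u p = 0 :=
      occursAt_singleton.1 (h.of_prefix (zero_prefix_phiW_concat_zero (Fword d k)))
    obtain ⟨q, rfl⟩ := hu.exists_phiPos_eq_of_apply_eq_zero hd hzero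
    have hq : OccursAt (Fword d k) u q := hu.occursAt_of_occursAt_phiW
      (fun a ha => (lt_of_mem_fword (by lia) ha).le.trans (by lia)) h
    rw [Fword, List.length_append, ← add_assoc, hu.phiPos_add_length hq, List.length_singleton,
      hu.apply_phiPos_add_one] at hnext
    obtain ⟨n, rfl⟩ := ih (by lia) hq (by lia)
    exact ⟨n, Function.iterate_succ_apply' ..⟩

lemma occursAt_fword_concat_iff (hu : IsPhiFixed d u) (hd : 2 ≤ d) {k p : ℕ} (hk : k ≤ d - 1) :
    OccursAt (Fword d k ++ [d - 1]) u p ↔ ∃ n, d - 1 ≤ u n + k ∧ (phiPos d u)^[k] n = p := by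
  constructor
  · intro h
    obtain ⟨hF, hlast⟩ := occursAt_append.1 h
    rw [occursAt_singleton] at hlast
    obtain ⟨n, rfl⟩ := hu.exists_iterate_phiPos_of_occursAt_fword hd hk hF (by lia)
    have hmin := occursAt_singleton.1 (occursAt_append.1 (hu.occursAt_fword k n)).2
    exact ⟨n, by lia, rfl⟩
  · rintro ⟨n, hn, rfl⟩
    have h := hu.occursAt_fword k n
    rwa [min_eq_right hn] at h

lemma apply_of_iterate_phiPos_succ_eq (hu : IsPhiFixed d u) {k n p : ℕ}
    (h : (phiPos d u)^[k] (n + 1) = p + 1) : u p = min (u n + k) (d - 1) := by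
  have hlt : (phiPos d u)^[k] n < p + 1 := h ▸ strictMono_iterate_phiPos k n.lt_succ_self
  have hsuffix := singleton_suffix_iterate_phiW (hu.apply_le n) k
  rw [hu.iterate_phiW_singleton_apply, h, slice_succ (Nat.le_of_lt_succ hlt),
    List.singleton_suffix_append_singleton_iff] at hsuffix
  exact hsuffix.symm

/- Desubstituting a letter `c` with `0 < c < d-1`, necessarily the last letter of its block,
yields `c - 1`; `j ≤ u n` allows `j` such steps. -/
lemma exists_iterate_phiPos_eq_succ (hu : IsPhiFixed d u) {j n : ℕ} (hj : j ≤ u n)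
    (hn : u n < d - 1) : ∃ m, (phiPos d u)^[j] m = n + 1 := by
  induction j generalizing n with
  | zero => exact ⟨n + 1, rfl⟩
  | succ j ih =>
    obtain ⟨q, rfl | rfl | ⟨rfl, hq⟩⟩ := exists_phiPos_add d u n
    · rw [hu.apply_phiPos] at hj
      lia
    · rw [hu.apply_phiPos_add_one] at hj hn
      obtain ⟨m, hm⟩ := ih (n := q) (by lia) (by lia)
      exact ⟨m, by rw [Function.iterate_succ_apply', hm, phiPos_succ_of_lt (by lia)]⟩
    · rw [hu.apply_phiPos_add_two_of_le hq] at hn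
      lia

lemma eq_zero_or_eq_of_isFactorS_pair_right (hu : IsPhiFixed d u) {a b : ℕ}
    (h : IsFactorS [a, b] u) (hb : b ≠ 0) : a = 0 ∨ a = d - 1 := by
  obtain ⟨p, hp⟩ := h
  simp only [occursAt_cons, occursAt_nil, and_true] at hp
  obtain ⟨rfl, rfl⟩ := hp
  obtain ⟨n, hn | hn | ⟨hn, hle⟩⟩ := exists_phiPos_add d u (p + 1)
  · exact absurd (hn ▸ hu.apply_phiPos n) hb
  · left
    rw [Nat.succ.inj hn, hu.apply_phiPos]
  · right
    rw [Nat.succ.inj hn, hu.apply_phiPos_add_one, min_eq_right (by lia)]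

lemma eq_zero_or_eq_of_isFactorS_pair_left (hu : IsPhiFixed d u) {a b : ℕ}
    (h : IsFactorS [a, b] u) (ha : a ≠ 0) : b = 0 ∨ b = d - 1 := by
  obtain ⟨p, hp⟩ := h
  simp only [occursAt_cons, occursAt_nil, and_true] at hp
  obtain ⟨rfl, rfl⟩ := hp
  obtain ⟨n, rfl | rfl | ⟨rfl, hle⟩⟩ := exists_phiPos_add d u p
  · exact absurd (hu.apply_phiPos n) ha
  · rcases lt_or_ge (u n) (d - 1) with hn | hn
    · exact Or.inl (hu.apply_phiPos_add_two_of_lt hn)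
    · exact Or.inr (hu.apply_phiPos_add_two_of_le hn)
  · exact Or.inl (hu.apply_phiPos_add_three_of_le hle)

lemma isFactorS_singleton (hu : IsPhiFixed d u) {c : ℕ} (hc : c ≤ d - 1) : IsFactorS [c] u := by
  have h := hu.isFactorS_iterate_phiW c ⟨0, occursAt_singleton.2 hu.1⟩
  rw [iterate_phiW_singleton (by lia), zero_add] at h
  exact h.of_infix (List.suffix_append _ _).isInfix

lemma isFactorS_append_of_suffix_of_prefix (hu : IsPhiFixed d u) {k a : ℕ} {s t v : List ℕ}
    (h : IsFactorS (a :: v) u) (hs : s <:+ (phiW d)^[k] [a]) (ht : t <+: (phiW d)^[k] v) :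
    IsFactorS (s ++ t) u := by
  obtain ⟨x, hx⟩ := hs
  obtain ⟨y, hy⟩ := ht
  refine (hu.isFactorS_iterate_phiW k h).of_infix ⟨x, y, ?_⟩
  rw [iterate_phiW_cons, ← hx, ← hy]
  simp

lemma isFactorS_zero_cons_zero (hu : IsPhiFixed d u) {c : ℕ} (hc : c < d - 1) :
    IsFactorS [0, c + 1, 0] u := by
  obtain ⟨x, hx⟩ := (hu.isFactorS_singleton hc.le).exists_concat
  refine hu.isFactorS_append_of_suffix_of_prefix (k := 1) (s := [0, c + 1]) (t := [0]) hx ?_ ?_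
  · simp [phiL, hc]
  · simpa using zero_prefix_phiL x

lemma isFactorS_zero_cons_pair (hu : IsPhiFixed d u) : IsFactorS [0, d - 1, d - 1] u := by
  simpa [phiL] using hu.isFactorS_iterate_phiW 1 (hu.isFactorS_singleton le_rfl)

/-! ### The factors `F_k (d-1)` with `k < d-1` -/

lemma completeReturn_fword_iff (hu : IsPhiFixed d u) (hd : 2 ≤ d) {k : ℕ} {R : List ℕ}
    (hk : k ≤ d - 1) : CompleteReturn u (Fword d k ++ [d - 1]) R ↔
      ∃ c y e, IsFactorS (c :: (y ++ [e])) u ∧ d - 1 ≤ c + k ∧ d - 1 ≤ e + k ∧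
        (∀ a ∈ y, a + k < d - 1) ∧ R = (phiW d)^[k] (c :: y) ++ (Fword d k ++ [d - 1]) := by
  rw [completeReturn_iff_of_strictMono (strictMono_iterate_phiPos k)
    fun p => hu.occursAt_fword_concat_iff hd hk]
  constructor
  · rintro ⟨n, m, hnm, hn, hm, hbetween, rfl⟩
    refine ⟨u n, slice u (n + 1) m, u m, ?_, hn, hm, ?_, ?_⟩
    · rw [← List.cons_append, ← slice_eq_cons hnm, ← slice_succ hnm.le]
      exact isFactorS_slice (by lia)
    · rintro a ha
      obtain ⟨t, ht, rfl⟩ := mem_slice.1 ha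
      exact not_le.1 (hbetween t (by lia) ht.2)
    · rw [← slice_eq_cons hnm, hu.iterate_phiW_slice k hnm.le]
  · rintro ⟨c, y, e, ⟨n, hfactor⟩, hc, he, hy, rfl⟩
    obtain ⟨rfl, hye⟩ := occursAt_cons.1 hfactor
    obtain ⟨hyocc, hlast⟩ := occursAt_append.1 hye
    rw [occursAt_singleton] at hlast
    have hlt : n < n + 1 + y.length := by lia
    have hyslice := occursAt_iff_slice.1 hyocc
    refine ⟨n, n + 1 + y.length, hlt, hc, by rwa [hlast], fun t hnt htm => ?_, ?_⟩
    · exact (hy (u t) (hyslice ▸ mem_slice.2 ⟨t, ⟨hnt, htm⟩, rfl⟩)).not_ge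
    · rw [← hu.iterate_phiW_slice k hlt.le, slice_eq_cons hlt, ← hyslice]

lemma fword_prefix_of_isFactorS (hu : IsPhiFixed d u) {c e j : ℕ} {y : List ℕ}
    (h : IsFactorS (c :: (y ++ [e])) u) (hjc : j ≤ c) (hc : c < d - 1) (hje : j ≤ e) :
    Fword d j <+: y := by
  obtain ⟨n, hn⟩ := h
  obtain ⟨rfl, hye⟩ := occursAt_cons.1 hn
  obtain ⟨m, hm⟩ := hu.exists_iterate_phiPos_eq_succ hjc hc
  have hF : OccursAt (Fword d j) u (n + 1) :=
    hm ▸ (hu.occursAt_fword j m).of_prefix (List.prefix_append _ _)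
  rcases le_or_gt (Fword d j).length y.length with hlen | hlen
  · exact hF.prefix_of_length_le (occursAt_append.1 hye).1 hlen
  · have he : e ∈ Fword d j :=
      (hye.prefix_of_length_le hF (by simpa using hlen)).subset (by simp)
    exact absurd (lt_of_mem_fword (by lia) he) hje.not_gt

lemma ncard_lext_fword (hu : IsPhiFixed d u) (hd : 2 ≤ d) {k : ℕ} (hk : k < d - 1) :
    (Lext u (Fword d k ++ [d - 1])).ncard = 2 := by
  have hprefix : Fword d k ++ [d - 1] <+: (phiW d)^[k] [d - 1] := by
    simpa using fword_concat_prefix_iterate_phiW (d := d) le_rfl k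
  refine ncard_lext_eq_two (a := k) (b := d - 1) hk.ne ?_ ?_ ?_
  · exact hu.isFactorS_append_of_suffix_of_prefix
      (hu.isFactorS_zero_cons_pair.of_infix (List.prefix_append [0, d - 1] _).isInfix)
      (by simpa [hk.le] using singleton_suffix_iterate_phiW (d := d) (Nat.zero_le _) k) hprefix
  · exact hu.isFactorS_append_of_suffix_of_prefix
      (hu.isFactorS_zero_cons_pair.of_infix (List.suffix_cons ..).isInfix)
      (by simpa using singleton_suffix_iterate_phiW (d := d) le_rfl k) hprefix
  · rintro c ⟨p, hp⟩
    obtain ⟨rfl, hw⟩ := occursAt_cons.1 hp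
    obtain ⟨n, hn, hnp⟩ := (hu.occursAt_fword_concat_iff hd hk.le).1 hw
    cases n with
    | zero => simp [iterate_phiPos_zero] at hnp
    | succ n =>
      have hpair : IsFactorS [u n, u (n + 1)] u := ⟨n, by simp [occursAt_cons]⟩
      have hprev := hu.eq_zero_or_eq_of_isFactorS_pair_right hpair (by lia)
      have hup := hu.apply_of_iterate_phiPos_succ_eq hnp
      lia

lemma ncard_rext_fword (hu : IsPhiFixed d u) (hd : 2 ≤ d) {k : ℕ} (hk : k < d - 1) :
    (Rext u (Fword d k ++ [d - 1])).ncard = 2 := by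
  refine ncard_rext_eq_two (a := 0) (b := d - 1) (by lia) ?_ ?_ fun c hc => ?_
  · have hfactor : IsFactorS [d - 1 - k, 0] u := by
      have h := hu.isFactorS_zero_cons_zero (c := d - 1 - k - 1) (by lia)
      rw [Nat.sub_add_cancel (by lia)] at h
      exact h.of_infix (List.suffix_cons ..).isInfix
    refine hu.isFactorS_append_of_suffix_of_prefix hfactor ?_ (zero_prefix_iterate_phiW k)
    rw [iterate_phiW_singleton (by lia), Nat.sub_add_cancel hk.le]
  · cases k with
    | zero => exact hu.isFactorS_zero_cons_pair.of_infix (List.suffix_cons ..).isInfix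
    | succ k =>
      have h := hu.isFactorS_iterate_phiW (k + 1) (hu.isFactorS_singleton le_rfl)
      simpa using h.of_infix (fword_append_pair_prefix_iterate_phiW le_rfl (by lia)).isInfix
  · refine hu.eq_zero_or_eq_of_isFactorS_pair_left (hc.of_infix ?_) (by lia : d - 1 ≠ 0)
    exact ⟨Fword d k, [], by simp⟩

lemma completeReturn_fword_top (hu : IsPhiFixed d u) (hd : 2 ≤ d) {k : ℕ} (hk : k ≤ d - 1) :
    CompleteReturn u (Fword d k ++ [d - 1])
      ((phiW d)^[k] [d - 1] ++ (Fword d k ++ [d - 1])) :=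
  (hu.completeReturn_fword_iff hd hk).2 ⟨d - 1, [], d - 1,
    hu.isFactorS_zero_cons_pair.of_infix (List.suffix_cons ..).isInfix, by lia, by lia, by simp,
    rfl⟩

lemma completeReturn_fword_zero (hu : IsPhiFixed d u) (hd : 2 ≤ d) {k : ℕ} (hk : k < d - 1) :
    CompleteReturn u (Fword d k ++ [d - 1])
      ((Fword d k ++ [d - 1]) ++ (phiW d)^[d - 1] [0]) := by
  obtain ⟨j, hjk⟩ : ∃ j, j + k = d - 1 := ⟨_, Nat.sub_add_cancel hk.le⟩
  have hzero_one : IsFactorS [0, 1] u :=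
    (hu.isFactorS_zero_cons_zero (c := 0) (by lia)).of_infix (List.prefix_append [0, 1] _).isInfix
  refine (hu.completeReturn_fword_iff hd hk.le).2
    ⟨j, Fword d j, min (1 + j) (d - 1), ?_, by lia, by lia, fun a ha => ?_, ?_⟩
  · refine hu.isFactorS_append_of_suffix_of_prefix (s := [j]) hzero_one ?_
      (fword_concat_prefix_iterate_phiW (by lia) j)
    rw [iterate_phiW_singleton (by lia), zero_add]
    exact List.suffix_append _ _
  · have haj := lt_of_mem_fword (by lia) ha
    lia
  · rw [iterate_phiW_zero hjk, iterate_phiW_cons, iterate_phiW_singleton hjk.le, hjk]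
    simp only [List.append_assoc]

lemma parikh_le_of_completeReturn_fword (hu : IsPhiFixed d u) (hd : 2 ≤ d) {k : ℕ} {R : List ℕ}
    (hk : k ≤ d - 1) (hR : CompleteReturn u (Fword d k ++ [d - 1]) R) :
    parikh d ((phiW d)^[k] [d - 1] ++ (Fword d k ++ [d - 1])) ≤ parikh d R ∨
      parikh d ((Fword d k ++ [d - 1]) ++ (phiW d)^[d - 1] [0]) ≤ parikh d R := by
  obtain ⟨c, y, e, hfactor, hc, he, -, rfl⟩ := (hu.completeReturn_fword_iff hd hk).1 hR
  have hcle : c ≤ d - 1 := by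
    obtain ⟨n, hn⟩ := hfactor
    exact (occursAt_cons.1 hn).1 ▸ hu.apply_le n
  rw [iterate_phiW_cons k c y]
  rcases hcle.eq_or_lt with rfl | hlt
  · exact Or.inl <| parikh_le_of_sublist d <|
      (List.sublist_append_left _ _).append (List.Sublist.refl _)
  · have hw : Fword d k ++ [d - 1] <+: (phiW d)^[k] [c] := by
      simpa [min_eq_right hc] using fword_concat_prefix_iterate_phiW hcle k
    have hF : Fword d (d - 1 - k) <+: y :=
      hu.fword_prefix_of_isFactorS hfactor (by lia) hlt (by lia)
    rw [iterate_phiW_zero (Nat.sub_add_cancel hk), ← List.append_assoc (Fword d k ++ [d - 1])]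
    exact Or.inr <| parikh_le_of_sublist d <|
      (hw.sublist.append (iterate_phiW_prefix k hF).sublist).append (List.Sublist.refl _)

/-! ### The factor `(d-1) F_{d-1} (d-1)` -/

lemma iterate_phiW_zero_eq (d : ℕ) : (phiW d)^[d - 1] [0] = Fword d (d - 1) ++ [d - 1] := by
  rw [iterate_phiW_singleton (zero_add _).le, zero_add]

lemma occursAt_cons_fword_iff (hu : IsPhiFixed d u) (hd : 2 ≤ d) {p : ℕ} :
    OccursAt ((d - 1) :: (Fword d (d - 1) ++ [d - 1])) u p ↔
      ∃ n, (phiPos d u)^[d - 1] (n + 1) = p + 1 := by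
  rw [occursAt_cons, hu.occursAt_fword_concat_iff hd le_rfl]
  constructor
  · rintro ⟨-, n, -, hn⟩
    cases n with
    | zero => simp [iterate_phiPos_zero] at hn
    | succ n => exact ⟨n, hn⟩
  · rintro ⟨n, hn⟩
    exact ⟨by simp [hu.apply_of_iterate_phiPos_succ_eq hn], n + 1, by lia, hn⟩

lemma slice_concat_of_iterate_phiPos (hu : IsPhiFixed d u) {n p q : ℕ}
    (hp : (phiPos d u)^[d - 1] (n + 1) = p + 1) (hq : (phiPos d u)^[d - 1] (n + 2) = q + 1) :
    slice u p q ++ [d - 1] = (d - 1) :: (phiW d)^[d - 1] [u (n + 1)] := by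
  have hlt : p < q := by
    have h := strictMono_iterate_phiPos (d := d) (u := u) (d - 1) (n + 1).lt_succ_self
    lia
  have hup : u p = d - 1 := by simp [hu.apply_of_iterate_phiPos_succ_eq hp]
  have huq : u q = d - 1 := by simp [hu.apply_of_iterate_phiPos_succ_eq hq]
  rw [hu.iterate_phiW_singleton_apply, hp, hq, slice_succ hlt, huq, slice_eq_cons hlt, hup,
    List.cons_append]

lemma completeReturn_cons_fword_iff (hu : IsPhiFixed d u) (hd : 2 ≤ d) {R : List ℕ} :
    CompleteReturn u ((d - 1) :: (Fword d (d - 1) ++ [d - 1])) R ↔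
      ∃ n, R = (d - 1) :: ((phiW d)^[d - 1] [u (n + 1)] ++ (Fword d (d - 1) ++ [d - 1])) := by
  set P := (phiPos d u)^[d - 1]
  have hpos (n : ℕ) : P (n + 1) = P (n + 1) - 1 + 1 :=
    (Nat.sub_add_cancel (iterate_phiPos_succ_pos (d - 1) n)).symm
  have hmono : StrictMono fun n => P (n + 1) - 1 := fun n m hnm => by
    have hlt : P (n + 1) < P (m + 1) := strictMono_iterate_phiPos (d - 1) (by lia)
    have hn := hpos n
    lia
  have hocc (p : ℕ) : OccursAt ((d - 1) :: (Fword d (d - 1) ++ [d - 1])) u p ↔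
      ∃ n, True ∧ P (n + 1) - 1 = p := by
    rw [hu.occursAt_cons_fword_iff hd]
    refine exists_congr fun n => ?_
    have hn := hpos n
    lia
  have hreturn (n : ℕ) : slice u (P (n + 1) - 1) (P (n + 2) - 1) ++
      (d - 1) :: (Fword d (d - 1) ++ [d - 1]) =
      (d - 1) :: ((phiW d)^[d - 1] [u (n + 1)] ++ (Fword d (d - 1) ++ [d - 1])) := by
    rw [List.append_cons, hu.slice_concat_of_iterate_phiPos (hpos n) (hpos (n + 1)),
      List.cons_append]
  rw [completeReturn_iff_of_strictMono hmono hocc]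
  constructor
  · rintro ⟨n, m, hnm, -, -, hbetween, rfl⟩
    obtain rfl : m = n + 1 := by
      by_contra hne
      exact hbetween (n + 1) (by lia) (by lia) trivial
    exact ⟨n, hreturn n⟩
  · rintro ⟨n, rfl⟩
    exact ⟨n, n + 1, n.lt_succ_self, trivial, trivial, fun t hnt htn => by lia, (hreturn n).symm⟩

lemma ncard_lext_cons_fword (hu : IsPhiFixed d u) (hd : 2 ≤ d) :
    (Lext u ((d - 1) :: (Fword d (d - 1) ++ [d - 1]))).ncard = 2 := by
  obtain ⟨k, hk⟩ : ∃ k, d - 1 = k + 1 := ⟨d - 2, by lia⟩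
  have hfactor := hu.isFactorS_zero_cons_zero (c := 0) (by lia)
  refine ncard_lext_eq_two (a := 0) (b := d - 1) (by lia) ?_ ?_ fun c hc => ?_
  · refine hu.isFactorS_append_of_suffix_of_prefix (k := d - 1) (s := [0, d - 1])
      (hfactor.of_infix (List.prefix_append [0, 1] _).isInfix) ?_ ?_
    · simpa [phiL, hk] using phiL_suffix_iterate_phiW (d := d) (Nat.zero_le _) k
    · simpa [hk] using fword_concat_prefix_iterate_phiW (d := d) (c := 1) (by lia) (d - 1)
  · refine hu.isFactorS_append_of_suffix_of_prefix (k := d - 1) (s := [d - 1, d - 1])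
      (t := Fword d (d - 1) ++ [d - 1]) (hfactor.of_infix (List.suffix_cons ..).isInfix) ?_ ?_
    · have h := phiL_suffix_iterate_phiW (d := d) (c := 1) (by lia) k
      rw [phiL, if_neg (by lia), ← hk] at h
      exact (List.suffix_cons _ _).trans h
    · rw [iterate_phiW_zero_eq]
  · exact hu.eq_zero_or_eq_of_isFactorS_pair_right
      (hc.of_infix (List.prefix_append [c, d - 1] _).isInfix) (by lia)

lemma ncard_rext_cons_fword (hu : IsPhiFixed d u) (hd : 2 ≤ d) :
    (Rext u ((d - 1) :: (Fword d (d - 1) ++ [d - 1]))).ncard = 2 := by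
  have hfactor := hu.isFactorS_zero_cons_zero (c := 0) (by lia)
  have hsuffix {c : ℕ} (hc : c ≤ d - 1) : [d - 1] <:+ (phiW d)^[d - 1] [c] := by
    simpa using singleton_suffix_iterate_phiW hc (d - 1)
  refine ncard_rext_eq_two (a := 0) (b := d - 1) (by lia) ?_ ?_ fun c hc => ?_
  · obtain ⟨x, hx⟩ := (hfactor.of_infix (List.suffix_cons ..).isInfix).exists_concat
    refine hu.isFactorS_append_of_suffix_of_prefix (s := [d - 1])
      (t := Fword d (d - 1) ++ [d - 1] ++ [0]) hx (hsuffix (by lia)) ?_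
    change _ <+: (phiW d)^[d - 1] ([0] ++ [x])
    rw [iterate_phiW_append, iterate_phiW_zero_eq, List.prefix_append_right_inj]
    obtain ⟨k, hk⟩ : ∃ k, d - 1 = k + 1 := ⟨d - 2, by lia⟩
    rw [hk, Function.iterate_succ_apply, phiW_singleton]
    exact (zero_prefix_iterate_phiW k).trans (iterate_phiW_prefix k (zero_prefix_phiL x))
  · refine hu.isFactorS_append_of_suffix_of_prefix (s := [d - 1])
      (hfactor.of_infix (List.prefix_append [0, 1] _).isInfix) (hsuffix (Nat.zero_le _)) ?_
    simpa using fword_append_pair_prefix_iterate_phiW (d := d) (c := 1) (by lia) (by lia)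
  · refine hu.eq_zero_or_eq_of_isFactorS_pair_left (hc.of_infix ?_) (by lia : d - 1 ≠ 0)
    exact ⟨(d - 1) :: Fword d (d - 1), [], by simp⟩

lemma completeReturn_cons_fword (hu : IsPhiFixed d u) (hd : 2 ≤ d) :
    CompleteReturn u ((d - 1) :: (Fword d (d - 1) ++ [d - 1]))
      ((d - 1) :: (Fword d (d - 1) ++ [d - 1]) ++ (phiW d)^[d - 1] [0]) := by
  obtain ⟨n, hn⟩ := Nat.exists_eq_succ_of_ne_zero 
    (iterate_phiPos_succ_pos (d := d) (u := u) 1 0).ne'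
  refine (hu.completeReturn_cons_fword_iff hd).2 ⟨n, ?_⟩
  rw [← Nat.succ_eq_add_one, ← hn, Function.iterate_one, hu.apply_phiPos, iterate_phiW_zero_eq,
    List.cons_append]

lemma parikh_le_of_completeReturn_cons_fword (hu : IsPhiFixed d u) (hd : 2 ≤ d) {R : List ℕ}
    (hR : CompleteReturn u ((d - 1) :: (Fword d (d - 1) ++ [d - 1])) R) :
    parikh d ((d - 1) :: (Fword d (d - 1) ++ [d - 1]) ++ (phiW d)^[d - 1] [0]) ≤ parikh d R := by
  obtain ⟨n, rfl⟩ := (hu.completeReturn_cons_fword_iff hd).1 hR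
  have hprefix : Fword d (d - 1) ++ [d - 1] <+: (phiW d)^[d - 1] [u (n + 1)] := by
    simpa using fword_concat_prefix_iterate_phiW (hu.apply_le (n + 1)) (d - 1)
  rw [iterate_phiW_zero_eq, List.cons_append]
  exact parikh_le_of_sublist d ((hprefix.sublist.append (List.Sublist.refl _)).cons_cons _)

end IsPhiFixed

/-! ### Iterates of the map on triplets -/

lemma iterate_fmap_nil {d c i : ℕ} (h : c + i ≤ d - 2) :
    (fmap d)^[i] (0, [], c) = (i, Fword d i, c + i) := by
  induction i with
  | zero => rfl
  | succ i ih =>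
    rw [Function.iterate_succ_apply', ih (by lia), fmap]
    simp only [Fword]
    rw [if_neg (by lia), if_neg (by lia), Nat.mod_eq_of_lt (by lia), Nat.mod_eq_of_lt (by lia)]
    simp [add_assoc]

lemma iterate_fmap_tinit_zero {d : ℕ} (hd : 2 ≤ d) :
    ((fmap d)^[d - 1] (Tinit d 0)).2.1 = (d - 1) :: (Fword d (d - 1) ++ [d - 1]) := by
  obtain ⟨e, rfl⟩ := Nat.exists_eq_add_of_le' hd
  rw [Tinit, if_neg (by lia), show e + 2 - 1 = e + 1 from rfl, Function.iterate_succ_apply',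
    iterate_fmap_nil (by lia), fmap, Fword]
  simp

lemma iterate_fmap_tinit {d k : ℕ} (hk : k < d - 1) :
    ((fmap d)^[k] (Tinit d (d - 1 - k))).2.1 = Fword d k ++ [d - 1] := by
  cases k with
  | zero => simp [Tinit, Fword]
  | succ k =>
    rw [Tinit, if_neg (by lia), Function.iterate_succ_apply', iterate_fmap_nil (by lia), fmap,
      Fword, if_neg (by lia), if_pos (by lia)]
    simp

theorem statement16_general (d : ℕ) (hd : 2 ≤ d) (u : ℕ → ℕ) (hu : IsPhiFixed d u)
    (k : ℕ) (w : List ℕ) (hw : w = ((fmap d)^[k] (Tinit d (d - 1 - k))).2.1) :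
    (k = d - 1 →
      w = (d - 1) :: (Fword d (d - 1) ++ [d - 1]) ∧
      (Lext u w).ncard = 2 ∧ (Rext u w).ncard = 2 ∧
      CompleteReturn u w (w ++ (phiW d)^[d - 1] [0]) ∧
      (∀ R : List ℕ, CompleteReturn u w R →
        parikh d (w ++ (phiW d)^[d - 1] [0]) ≤ parikh d R)) ∧
    (k < d - 1 →
      w = Fword d k ++ [d - 1] ∧
      (Lext u w).ncard = 2 ∧ (Rext u w).ncard = 2 ∧
      CompleteReturn u w ((phiW d)^[k] [d - 1] ++ w) ∧
      CompleteReturn u w (w ++ (phiW d)^[d - 1] [0]) ∧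
      (∀ R : List ℕ, CompleteReturn u w R →
        parikh d ((phiW d)^[k] [d - 1] ++ w) ≤ parikh d R ∨
        parikh d (w ++ (phiW d)^[d - 1] [0]) ≤ parikh d R)) := by
  constructor
  · rintro rfl
    rw [Nat.sub_self, iterate_fmap_tinit_zero hd] at hw
    subst hw
    exact ⟨rfl, hu.ncard_lext_cons_fword hd, hu.ncard_rext_cons_fword hd,
      hu.completeReturn_cons_fword hd, fun _ => hu.parikh_le_of_completeReturn_cons_fword hd⟩
  · intro hk
    rw [iterate_fmap_tinit hk] at hw
    subst hw
    exact ⟨rfl, hu.ncard_lext_fword hd hk, hu.ncard_rext_fword hd hk,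
      hu.completeReturn_fword_top hd hk.le, hu.completeReturn_fword_zero hd hk,
      fun _ => hu.parikh_le_of_completeReturn_fword hd hk.le⟩

/-- Let `d ≥ 3`, `k ≤ d−1`, and let `w` be the middle component of
`f^k(T_{d−1−k})`. If `k = d−1`, then `w = (d−1)F_{d−1}(d−1)`, `w` has exactly two left
and two right extensions, `B = w·φ^{d−1}(0)` is a complete return word to `w`, and every
complete return word `R` to `w` satisfies `R⃗ ≥ B⃗`. If `k < d−1`, then `w = F_k(d−1)`,
`w` has exactly two left and two right extensions, `A = φ^k(d−1)·w` and `B = w·φ^{d−1}(0)`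
are complete return words to `w`, and every complete return word `R` to `w` satisfies
`R⃗ ≥ A⃗` or `R⃗ ≥ B⃗`. -/
theorem statement16 (d : ℕ) (hd : 3 ≤ d) (u : ℕ → ℕ) (hu : IsPhiFixed d u)
    (k : ℕ) (hk : k ≤ d - 1) (w : List ℕ)
    (hw : w = ((fmap d)^[k] (Tinit d (d - 1 - k))).2.1) :
    (k = d - 1 →
      w = (d - 1) :: (Fword d (d - 1) ++ [d - 1]) ∧
      (Lext u w).ncard = 2 ∧ (Rext u w).ncard = 2 ∧
      CompleteReturn u w (w ++ (phiW d)^[d - 1] [0]) ∧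
      (∀ R : List ℕ, CompleteReturn u w R →
        parikh d (w ++ (phiW d)^[d - 1] [0]) ≤ parikh d R)) ∧
    (k < d - 1 →
      w = Fword d k ++ [d - 1] ∧
      (Lext u w).ncard = 2 ∧ (Rext u w).ncard = 2 ∧
      CompleteReturn u w ((phiW d)^[k] [d - 1] ++ w) ∧
      CompleteReturn u w (w ++ (phiW d)^[d - 1] [0]) ∧
      (∀ R : List ℕ, CompleteReturn u w R →
        parikh d ((phiW d)^[k] [d - 1] ++ w) ≤ parikh d R ∨
        parikh d (w ++ (phiW d)^[d - 1] [0]) ≤ parikh d R)) :=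
  statement16_general d (by lia) u hu k w hw

end RichRT
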